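/- Let f_k : G → ℂ be analytic functions on a domain G ⊆ ℂ with ∑_k |f_k(z)|² converging locally uniformly and not all f_k identically zero. Then the function z ↦ (1/2) log(∑_k |f_k(z)|²) is subharmonic on G. -/

import Mathlib

open MeasureTheory Metric Complex Filter

/-- The circle average `(2π)⁻¹ ∫₀^{2π} u(z + r e^{iθ}) dθ` of a function with
values in `[-∞, ∞]` (computed via `EReal.toReal`; for the functions considered
here, which are finite off a null set, this is the usual circle average). -/
noncomputable def circleAverage (u : ℂ → EReal) (z : ℂ) (r : ℝ) : ℝ :=
  (2 * Real.pi)⁻¹ *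
    ∫ θ in (0 : ℝ)..(2 * Real.pi), (u (z + r * Complex.exp (θ * Complex.I))).toReal

/-- `u : ℂ → [-∞, ∞)` is subharmonic on `G`: upper semicontinuous on `G`, and
satisfying the sub-mean-value inequality on every closed disc contained in `G`. -/
def SubharmonicOn (u : ℂ → EReal) (G : Set ℂ) : Prop :=
  UpperSemicontinuousOn u G ∧
    ∀ z ∈ G, ∀ r : ℝ, 0 < r → closedBall z r ⊆ G →
      u z ≤ (circleAverage u z r : ℝ)

/-- Sub-mean-value inequality for `log ‖h‖`, from Jensen's formula. -/
theorem log_norm_le_average {h : ℂ → ℂ} {z : ℂ} {r : ℝ} (hr : 0 < r)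
    (hh : AnalyticOnNhd ℂ h (closedBall z r)) (hz : h z ≠ 0) :
    Real.log ‖h z‖ ≤ Real.circleAverage (fun w => Real.log ‖h w‖) z r := by
  have habs : |r| = r := abs_of_pos hr
  have hh' : AnalyticOnNhd ℂ h (closedBall z |r|) := by rwa [habs]
  rw [hh'.circleAverage_log_norm hr.ne' hz]
  have : 0 ≤ ∑ᶠ u, (MeromorphicOn.divisor h (closedBall z |r|) u : ℝ)
      * Real.log (r * ‖z - u‖⁻¹) := by
    apply finsum_nonneg
    intro u
    by_cases hu : u ∈ closedBall z |r|
    · refine mul_nonneg (mod_cast MeromorphicOn.AnalyticOnNhd.divisor_nonneg hh' u) ?_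
      by_cases huz : z = u
      · simp [huz]
      · apply Real.log_nonneg
        have h0 : 0 < ‖z - u‖ := norm_pos_iff.2 (sub_ne_zero.2 huz)
        rw [mem_closedBall, dist_eq_norm', habs] at hu
        rw [← div_eq_mul_inv, one_le_div h0]
        exact hu
    · simp [hu]
  linarith

theorem log_le_of_dominated {h : ℂ → ℂ} {S : ℂ → ℝ} {z : ℂ} {r A : ℝ} (hr : 0 < r)
    (hh : AnalyticOnNhd ℂ h (closedBall z r)) (hz : h z ≠ 0) (hA : 0 < A)
    (hS : ContinuousOn S (closedBall z r)) (hS0 : ∀ w, 0 ≤ S w)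
    (hle : ∀ w ∈ closedBall z r, ‖h w‖ ^ 2 ≤ A * S w) :
    Real.log ‖h z‖ ≤ 1 / 2 * Real.log A +
      (2 * Real.pi)⁻¹ * ∫ θ in (0 : ℝ)..(2 * Real.pi),
        1 / 2 * Real.log (S (circleMap z r θ)) := by
  have habs : |r| = r := abs_of_pos hr
  have hmem : ∀ θ, circleMap z r θ ∈ closedBall z r := fun θ =>
    circleMap_mem_closedBall z hr.le θ
  have hSc : Continuous (fun θ => S (circleMap z r θ)) :=
    hS.comp_continuous (continuous_circleMap z r) hmem
  have hint : IntervalIntegrable (fun θ => Real.log ‖h (circleMap z r θ)‖) volume 0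
      (2 * Real.pi) :=
    (MeromorphicOn.circleIntegrable_log_norm_of_nonneg
      (hh.mono sphere_subset_closedBall).meromorphicOn hr.le)
  have hne : ∀ᵐ θ ∂(volume.restrict (Set.uIoc 0 (2 * Real.pi))), h (circleMap z r θ) ≠ 0 := by
    apply ae_restrict_le_codiscreteWithin measurableSet_uIoc
    have h1 : h ⁻¹' {0}ᶜ ∈ codiscreteWithin (sphere z |r|) :=
      codiscreteWithin_mono (by rw [habs]; exact sphere_subset_closedBall)
        (hh.preimage_zero_mem_codiscreteWithin hz (mem_closedBall_self hr.le)
          ((convex_closedBall z r).isConnected ⟨z, mem_closedBall_self hr.le⟩))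
    exact codiscreteWithin_mono (by tauto) (circleMap_preimage_codiscrete hr.ne' h1)
  have hlow : ∀ᵐ θ ∂(volume.restrict (Set.uIoc 0 (2 * Real.pi))),
      Real.log ‖h (circleMap z r θ)‖ - 1 / 2 * Real.log A
        ≤ 1 / 2 * Real.log (S (circleMap z r θ)) := by
    filter_upwards [hne] with θ hθ
    have hp : 0 < ‖h (circleMap z r θ)‖ := norm_pos_iff.2 hθ
    have h2 := hle _ (hmem θ)
    have hSp : 0 < S (circleMap z r θ) := by
      rcases (hS0 (circleMap z r θ)).lt_or_eq with h3 | h3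
      · exact h3
      · rw [← h3] at h2
        have : 0 < ‖h (circleMap z r θ)‖ ^ 2 := by positivity
        linarith
    have h4 := Real.log_le_log (by positivity) h2
    rw [Real.log_pow, Real.log_mul hA.ne' hSp.ne'] at h4
    push_cast at h4
    linarith
  have hint1 : IntervalIntegrable
      (fun θ => Real.log ‖h (circleMap z r θ)‖ - 1 / 2 * Real.log A) volume 0
      (2 * Real.pi) := hint.sub intervalIntegrable_const
  have hint3 : IntervalIntegrable
      (fun θ => 1 / 2 * S (circleMap z r θ)) volume 0 (2 * Real.pi) :=
    (hSc.const_mul _).intervalIntegrable _ _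
  have hint2 : IntervalIntegrable
      (fun θ => 1 / 2 * Real.log (S (circleMap z r θ))) volume 0 (2 * Real.pi) := by
    rw [intervalIntegrable_iff] at *
    refine integrable_of_le_of_le ?_ hlow ?_ hint1 hint3
    · exact ((Real.measurable_log.comp hSc.measurable).const_mul _).aestronglyMeasurable
    · refine Eventually.of_forall fun θ => ?_
      have := Real.log_le_self (hS0 (circleMap z r θ))
      simp only
      linarith
  have hmono := intervalIntegral.integral_mono_ae_restrict
    (a := 0) (b := 2 * Real.pi) (μ := volume) Real.two_pi_pos.le hint1 hint2
    (by
      rw [Set.uIoc_of_le Real.two_pi_pos.le] at hlow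
      rwa [EventuallyLE, ← MeasureTheory.restrict_Ioc_eq_restrict_Icc])
  rw [intervalIntegral.integral_sub hint intervalIntegrable_const,
    intervalIntegral.integral_const] at hmono
  have hJ := log_norm_le_average hr hh hz
  rw [Real.circleAverage_def] at hJ
  have hpi := Real.two_pi_pos
  have hm := mul_le_mul_of_nonneg_left hmono (inv_pos.2 hpi).le
  simp only [smul_eq_mul, sub_zero, mul_sub, inv_mul_cancel_left₀ hpi.ne'] at hm hJ
  linarith

/-- If `f_k : G → ℂ` are holomorphic on a domain `G`, with `∑_k |f_k|²`
converging locally uniformly on `G` and not all `f_k` identically zero, then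
`z ↦ (1/2) log ∑_k |f_k(z)|²` is subharmonic on `G` (with value `-∞` at common
zeroes of all the `f_k`). -/
theorem subharmonic_log_norm_of_holomorphic_family
    (G : Set ℂ) (hG : IsOpen G) (hGc : IsConnected G)
    (f : ℕ → ℂ → ℂ) (hf : ∀ k, DifferentiableOn ℂ (f k) G)
    (hconv : TendstoLocallyUniformlyOn
      (fun N z => ∑ k ∈ Finset.range N, ‖f k z‖ ^ 2)
      (fun z => ∑' k, ‖f k z‖ ^ 2) atTop G)
    (hnz : ∃ k, ∃ z ∈ G, f k z ≠ 0) :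
    SubharmonicOn
      (fun z => if (∑' k, ‖f k z‖ ^ 2) = 0 then (⊥ : EReal)
        else ((1 / 2 * Real.log (∑' k, ‖f k z‖ ^ 2) : ℝ) : EReal)) G := by
  have hS0 : ∀ w, 0 ≤ ∑' k, ‖f k w‖ ^ 2 := fun w => tsum_nonneg fun k => by positivity
  have hcont : ContinuousOn (fun z => ∑' k, ‖f k z‖ ^ 2) G :=
    hconv.continuousOn (Frequently.of_forall fun N =>
      continuousOn_finsetSum _ fun k _ => ((hf k).continuousOn.norm.pow 2))
  have htend : ∀ w ∈ G, Tendsto (fun N => ∑ k ∈ Finset.range N, ‖f k w‖ ^ 2) atTop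
      (nhds (∑' k, ‖f k w‖ ^ 2)) := fun w hw => hconv.tendsto_at hw
  have hpart : ∀ w ∈ G, ∀ N, ∑ k ∈ Finset.range N, ‖f k w‖ ^ 2 ≤ ∑' k, ‖f k w‖ ^ 2 := by
    intro w hw N
    have hs := (hasSum_iff_tendsto_nat_of_nonneg (fun k => by positivity) _).2 (htend w hw)
    exact hs.summable.sum_le_tsum _ fun k _ => by positivity
  generalize hSdef : (fun z => ∑' k, ‖f k z‖ ^ 2) = S at *
  have hSd : ∀ w, ∑' k, ‖f k w‖ ^ 2 = S w := fun w => congrFun hSdef w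
  simp only [hSd] at *
  refine ⟨?_, ?_⟩
  · intro x hx y hy
    have hcx : Tendsto S (nhdsWithin x G) (nhds (S x)) := hcont x hx
    by_cases h0 : S x = 0
    · simp only [h0, if_true] at hy
      obtain ⟨c, -, hc⟩ := EReal.lt_iff_exists_real_btwn.1 hy
      have hev := hcx.eventually (gt_mem_nhds (b := S x) (a := Real.exp (2 * c))
        (by rw [h0]; exact Real.exp_pos _))
      filter_upwards [hev] with w hw
      by_cases hw0 : S w = 0
      · simpa [hw0] using hy
      · simp only [hw0, if_false]
        refine lt_trans ?_ hc
        rw [EReal.coe_lt_coe_iff]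
        have := (Real.log_lt_iff_lt_exp (lt_of_le_of_ne (hS0 w) (Ne.symm hw0))).2 hw
        linarith
    · simp only [h0, if_false] at hy
      have h1 : Tendsto (fun w => ((1 / 2 * Real.log (S w) : ℝ) : EReal)) (nhdsWithin x G)
          (nhds ((1 / 2 * Real.log (S x) : ℝ) : EReal)) :=
        (continuous_coe_real_ereal.tendsto _).comp ((hcx.log h0).const_mul _)
      filter_upwards [h1.eventually (gt_mem_nhds hy), hcx.eventually_ne h0] with w hw hw0
      simpa only [hw0, if_false] using hw
  · intro z hz r hr hball
    by_cases h0 : S z = 0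
    · simp [h0]
    simp only [h0, if_false]
    rw [EReal.coe_le_coe_iff]
    have hcirc : circleAverage (fun z => if S z = 0 then (⊥ : EReal)
        else ((1 / 2 * Real.log (S z) : ℝ) : EReal)) z r =
        (2 * Real.pi)⁻¹ * ∫ θ in (0 : ℝ)..(2 * Real.pi),
          1 / 2 * Real.log (S (circleMap z r θ)) := by
      unfold circleAverage
      congr 1
      apply intervalIntegral.integral_congr
      intro θ _
      simp only [circleMap]
      split_ifs with h
      · simp [h]
      · rfl
    rw [hcirc]
    have hlim := ((htend z hz).log h0).const_mul (1 / 2 : ℝ)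
    refine le_of_tendsto hlim ?_
    filter_upwards [(htend z hz).eventually_ne h0] with N hN
    set A := ∑ k ∈ Finset.range N, ‖f k z‖ ^ 2 with hAdef
    have hA : 0 < A := lt_of_le_of_ne (Finset.sum_nonneg fun k _ => by positivity) (Ne.symm hN)
    let h : ℂ → ℂ := fun w => ∑ k ∈ Finset.range N, (starRingEnd ℂ) (f k z) * f k w
    have hhz : h z = (A : ℂ) := by
      simp only [h, hAdef]
      push_cast
      exact Finset.sum_congr rfl fun k _ => Complex.conj_mul' _
    have hhd : DifferentiableOn ℂ h G :=
      DifferentiableOn.fun_sum fun k _ => (hf k).const_mul _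
    have hha : AnalyticOnNhd ℂ h (closedBall z r) := (hhd.analyticOnNhd hG).mono hball
    have hkey := log_le_of_dominated (S := S) hr hha (by rw [hhz]; exact_mod_cast hN) hA
      (hcont.mono hball) hS0 (by
        intro w hw
        calc ‖h w‖ ^ 2 ≤ (∑ k ∈ Finset.range N, ‖f k z‖ * ‖f k w‖) ^ 2 := by
              gcongr
              refine (norm_sum_le _ _).trans (le_of_eq ?_)
              exact Finset.sum_congr rfl fun k _ => by simp
          _ ≤ A * ∑ k ∈ Finset.range N, ‖f k w‖ ^ 2 := Finset.sum_mul_sq_le_sq_mul_sq _ _ _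
          _ ≤ A * S w := by
              gcongr
              exact hpart w (hball hw) N)
    rw [hhz, Complex.norm_real, Real.norm_of_nonneg hA.le] at hkey
    linarith
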